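/- arXiv:2103.15000 — 3 statements merged into one kernel-verified Lean document; each statement's English description precedes it below -/
import Mathlib

section
/- Let 0 < α < 1 and let (a_m)_{m≥0}, (b_m)_{m≥0} be real sequences such that the power series κ₁(t) = ∑_{m=0}^∞ a_m t^m and k₁(t) = ∑_{m=0}^∞ b_m t^m converge for all t ∈ ℝ, a₀ ≠ 0, and the coefficients satisfy a₀ b₀ = 1 and ∑_{m=0}^{N} Γ(m+1−α) Γ(α+N−m) a__{N−m} b_m = 0 for all N ≥ 1. Then the kernels κ(t) = h_α(t) κ₁(t) and k(t) = h_{1−α}(t) k₁(t) satisfy the Sonine condition (κ * k)(t) = 1 for all t > 0. -/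
/-!
Since `h_α(t) tᵐ = Γ(α+m)/Γ(α) h_{α+m}(t)`, both kernels are series of Riemann–Liouville kernels
`h_{α+m}` and `h_{1-α+n}`. By Euler's beta integral `h_μ * h_ν = h_{μ+ν}`, so the convolution of two
such series is formed by taking the Cauchy product of their coefficients. The hypothesis on `a`
and `b` says that this Cauchy product is `1, 0, 0, …`, which leaves `h_1 = 1`. Termwise convolution
is justified by dominated convergence: `h_{α+m}/h_α` is nondecreasing, so on `(0, t]` the `m`-th
term is at most a constant multiple of `h_α`, and these constants are summable because the series
converges absolutely at `t`.
-/

open Real MeasureTheory Set Filter Topology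

/-- The Laplace convolution `(f * g)(t) = ∫₀ᵗ f(t-τ) g(τ) dτ`. -/
noncomputable def lconv (f g : ℝ → ℝ) : ℝ → ℝ :=
  fun t => ∫ τ in (0:ℝ)..t, f (t - τ) * g τ

/-- The space `C_{-1}(0,∞)`: functions of the form `t^p f₁(t)` with `p > -1`
and `f₁` continuous on `[0,∞)`. -/
def Cm1 (f : ℝ → ℝ) : Prop :=
  ∃ p : ℝ, -1 < p ∧ ∃ f₁ : ℝ → ℝ, ContinuousOn f₁ (Set.Ici 0) ∧
    ∀ t : ℝ, 0 < t → f t = t ^ p * f₁ t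

/-- The subspace `C_{-1,0}(0,∞)`: functions of the form `t^p f₁(t)` with `-1 < p < 0`
and `f₁` continuous on `[0,∞)`. -/
def Cm10 (f : ℝ → ℝ) : Prop :=
  ∃ p : ℝ, -1 < p ∧ p < 0 ∧ ∃ f₁ : ℝ → ℝ, ContinuousOn f₁ (Set.Ici 0) ∧
    ∀ t : ℝ, 0 < t → f t = t ^ p * f₁ t

theorem lconv_congr {f f' g g' : ℝ → ℝ} {t : ℝ} (ht : 0 ≤ t) (hf : EqOn f f' (Ioo 0 t))
    (hg : EqOn g g' (Ioo 0 t)) : lconv f g t = lconv f' g' t := by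
  refine intervalIntegral.integral_congr_Ioo_of_le ht fun τ hτ => ?_
  have hτ' : t - τ ∈ Ioo 0 t := ⟨sub_pos.2 hτ.2, sub_lt_self t hτ.1⟩
  simp only [hf hτ', hg hτ]

theorem lconv_const_mul (c d : ℝ) (f g : ℝ → ℝ) (t : ℝ) :
    lconv (fun s => c * f s) (fun s => d * g s) t = c * d * lconv f g t := by
  simp only [lconv, mul_mul_mul_comm c, intervalIntegral.integral_const_mul]

theorem hasSum_lconv_of_dominated {ι ι' : Type*} [Countable ι] [Countable ι']
    {f : ι → ℝ → ℝ} {g : ι' → ℝ → ℝ} {A : ι → ℝ} {B : ι' → ℝ} {F G : ℝ → ℝ} {t : ℝ}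
    (ht : 0 ≤ t) (hf : ∀ i, Measurable (f i)) (hg : ∀ j, Measurable (g j))
    (hfA : ∀ i, ∀ s ∈ Ioo 0 t, |f i s| ≤ A i * F s)
    (hgB : ∀ j, ∀ s ∈ Ioo 0 t, |g j s| ≤ B j * G s)
    (hA : Summable A) (hB : Summable B)
    (hFG : IntervalIntegrable (fun τ => F (t - τ) * G τ) volume 0 t) :
    HasSum (fun p : ι × ι' => lconv (f p.1) (g p.2) t)
      (lconv (fun s => ∑' i, f i s) (fun s => ∑' j, g j s) t) := by
  have hAB : Summable fun p : ι × ι' => A p.1 * B p.2 :=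
    summable_mul_of_summable_norm hA.norm hB.norm
  have ae_Ioo : ∀ᵐ τ : ℝ, τ ∈ uIoc 0 t → τ ∈ Ioo 0 t ∧ t - τ ∈ Ioo 0 t := by
    filter_upwards [volume.ae_ne t] with τ hτt hτ
    rw [uIoc_of_le ht] at hτ
    have hlt : τ < t := hτ.2.lt_of_ne hτt
    exact ⟨⟨hτ.1, hlt⟩, sub_pos.2 hlt, sub_lt_self t hτ.1⟩
  refine intervalIntegral.hasSum_integral_of_dominated_convergence
    (fun p τ => A p.1 * B p.2 * (F (t - τ) * G τ)) (fun p => ?_) (fun p => ?_)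
    (.of_forall fun τ _ => hAB.mul_right _) ?_ ?_
  · exact (((hf p.1).comp (measurable_const.sub measurable_id)).mul (hg p.2)).aestronglyMeasurable
  · filter_upwards [ae_Ioo] with τ hIoo hτ
    obtain ⟨hτ, hτ'⟩ := hIoo hτ
    calc ‖f p.1 (t - τ) * g p.2 τ‖ = |f p.1 (t - τ)| * |g p.2 τ| := abs_mul _ _
      _ ≤ A p.1 * F (t - τ) * (B p.2 * G τ) :=
        mul_le_mul (hfA _ _ hτ') (hgB _ _ hτ) (abs_nonneg _) ((abs_nonneg _).trans (hfA _ _ hτ'))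
      _ = A p.1 * B p.2 * (F (t - τ) * G τ) := mul_mul_mul_comm ..
  · simpa only [tsum_mul_right] using hFG.const_mul (∑' p : ι × ι', A p.1 * B p.2)
  · filter_upwards [ae_Ioo] with τ hIoo hτ
    obtain ⟨hτ, hτ'⟩ := hIoo hτ
    have hfs : Summable fun i => ‖f i (t - τ)‖ :=
      (hA.mul_right _).of_nonneg_of_le (fun _ => norm_nonneg _) (hfA · _ hτ')
    have hgs : Summable fun j => ‖g j τ‖ :=
      (hB.mul_right _).of_nonneg_of_le (fun _ => norm_nonneg _) (hgB · _ hτ)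
    exact hfs.of_norm.hasSum.mul hgs.of_norm.hasSum (summable_mul_of_summable_norm hfs hgs)

theorem hasSum_sum_antidiagonal {A M : Type*} [AddMonoid A] [Finset.HasAntidiagonal A]
    [AddCommMonoid M] [TopologicalSpace M] [ContinuousAdd M] [RegularSpace M]
    {f : A × A → M} {x : M} (hf : HasSum f x) :
    HasSum (fun n => ∑ p ∈ Finset.HasAntidiagonal.antidiagonal n, f p) x :=
  (Finset.HasAntidiagonal.sigmaAntidiagonalEquivProd.hasSum_iff.2 hf).sigma fun n =>
    Finset.hasSum (Finset.HasAntidiagonal.antidiagonal n) f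

theorem integral_rpow_mul_sub_rpow {u v t : ℝ} (hu : 0 < u) (hv : 0 < v) (ht : 0 < t) :
    ∫ x in 0..t, x ^ (u - 1) * (t - x) ^ (v - 1) =
      t ^ (u + v - 1) * ProbabilityTheory.beta u v := by
  have cast_integrand : ∀ x ∈ uIcc 0 t,
      (x : ℂ) ^ ((u : ℂ) - 1) * ((t : ℂ) - x) ^ ((v : ℂ) - 1) =
        ((x ^ (u - 1) * (t - x) ^ (v - 1) : ℝ) : ℂ) := by
    intro x hx
    rw [uIcc_of_le ht.le] at hx
    push_cast [Complex.ofReal_cpow hx.1, Complex.ofReal_cpow (sub_nonneg.2 hx.2)]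
    rfl
  have scaled := Complex.betaIntegral_scaled u v ht
  rw [Complex.betaIntegral_eq_Gamma_mul_div _ _ (by simpa using hu) (by simpa using hv),
    intervalIntegral.integral_congr cast_integrand, intervalIntegral.integral_ofReal] at scaled
  rw [← Complex.ofReal_inj, scaled, ProbabilityTheory.beta]
  push_cast [Complex.ofReal_cpow ht.le, ← Complex.Gamma_ofReal]
  rfl

/-- The Riemann–Liouville kernel `h_α(t) = t^(α-1) / Γ(α)`, convolution with which is fractional
integration of order `α`. -/
noncomputable def rlKernel (α t : ℝ) : ℝ :=
  t ^ (α - 1) / Gamma α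

section RlKernel

variable {α β t : ℝ}

theorem measurable_rlKernel (α : ℝ) : Measurable (rlKernel α) :=
  (measurable_id.pow_const (α - 1)).div_const (Gamma α)

theorem rlKernel_pos (hα : 0 < α) (ht : 0 < t) : 0 < rlKernel α t :=
  div_pos (rpow_pos_of_pos ht _) (Gamma_pos_of_pos hα)

theorem rlKernel_one (t : ℝ) : rlKernel 1 t = 1 := by
  simp [rlKernel]

theorem rlKernel_add (hα : 0 < α) (ht : 0 < t) (γ : ℝ) :
    rlKernel (α + γ) t = Gamma α / Gamma (α + γ) * t ^ γ * rlKernel α t := by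
  have hΓ : Gamma α ≠ 0 := (Gamma_pos_of_pos hα).ne'
  rw [rlKernel, rlKernel, add_sub_right_comm, rpow_add ht]
  field_simp

theorem rlKernel_mul_pow (hα : 0 < α) (ht : 0 < t) (n : ℕ) :
    rlKernel α t * t ^ n = Gamma (α + n) / Gamma α * rlKernel (α + n) t := by
  have hΓ : Gamma α ≠ 0 := (Gamma_pos_of_pos hα).ne'
  have hΓn : Gamma (α + n) ≠ 0 := (Gamma_pos_of_pos (by positivity)).ne'
  rw [rlKernel_add hα ht, rpow_natCast]
  field_simp

theorem monotoneOn_rlKernel_add_div_rlKernel {γ : ℝ} (hα : 0 < α) (hγ : 0 ≤ γ) :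
    MonotoneOn (fun s => rlKernel (α + γ) s / rlKernel α s) (Ioi 0) := by
  intro s (hs : 0 < s) t (ht : 0 < t) hst
  have : 0 < Gamma α := Gamma_pos_of_pos hα
  have : 0 < Gamma (α + γ) := Gamma_pos_of_pos (by positivity)
  simp only [rlKernel_add hα hs, rlKernel_add hα ht,
    mul_div_cancel_right₀ _ (rlKernel_pos hα hs).ne',
    mul_div_cancel_right₀ _ (rlKernel_pos hα ht).ne']
  gcongr

theorem lconv_rlKernel (hα : 0 < α) (hβ : 0 < β) (ht : 0 < t) :
    lconv (rlKernel α) (rlKernel β) t = rlKernel (α + β) t := by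
  have hΓα : Gamma α ≠ 0 := (Gamma_pos_of_pos hα).ne'
  have hΓβ : Gamma β ≠ 0 := (Gamma_pos_of_pos hβ).ne'
  calc lconv (rlKernel α) (rlKernel β) t
      = ∫ τ in 0..t, (Gamma α * Gamma β)⁻¹ * (τ ^ (β - 1) * (t - τ) ^ (α - 1)) := by
        refine intervalIntegral.integral_congr fun τ _ => ?_
        simp only [rlKernel]
        field_simp
    _ = (Gamma α * Gamma β)⁻¹ * (t ^ (β + α - 1) * ProbabilityTheory.beta β α) := by
        rw [intervalIntegral.integral_const_mul, integral_rpow_mul_sub_rpow hβ hα ht]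
    _ = rlKernel (α + β) t := by
        rw [ProbabilityTheory.beta, rlKernel, add_comm β α]
        field_simp

theorem intervalIntegrable_rlKernel_sub_mul_rlKernel (hα : 0 < α) (hβ : 0 < β) (ht : 0 < t) :
    IntervalIntegrable (fun τ => rlKernel α (t - τ) * rlKernel β τ) volume 0 t :=
  intervalIntegral.intervalIntegrable_of_integral_ne_zero <|
    (lconv_rlKernel hα hβ ht).trans_ne (rlKernel_pos (add_pos hα hβ) ht).ne'

end RlKernel

/-- The series `∑ cₘ h_{α+m}` of Riemann–Liouville kernels: the form of `h_α` times a power series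
in which convolution becomes the Cauchy product of coefficients. Its value is `0` where it
diverges. -/
noncomputable def rlSeries (α : ℝ) (c : ℕ → ℝ) (t : ℝ) : ℝ :=
  ∑' m : ℕ, c m * rlKernel (α + m) t

section RlSeries

variable {α β t : ℝ} {c d : ℕ → ℝ}

theorem rlKernel_mul_mul_pow (hα : 0 < α) (ht : 0 < t) (a : ℕ → ℝ) (m : ℕ) :
    rlKernel α t * (a m * t ^ m) = a m * (Gamma (α + m) / Gamma α) * rlKernel (α + m) t := by
  rw [mul_left_comm, rlKernel_mul_pow hα ht, mul_assoc]

theorem rlKernel_mul_tsum_pow (hα : 0 < α) (ht : 0 < t) (a : ℕ → ℝ) :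
    rlKernel α t * ∑' m : ℕ, a m * t ^ m =
      rlSeries α (fun m => a m * (Gamma (α + m) / Gamma α)) t := by
  simp only [rlSeries, ← tsum_mul_left, rlKernel_mul_mul_pow hα ht a]

theorem abs_mul_rlKernel_le {s : ℝ} (hα : 0 < α) (hs : 0 < s) (hst : s ≤ t) (c : ℕ → ℝ) (m : ℕ) :
    |c m * rlKernel (α + m) s| ≤ |c m * rlKernel (α + m) t| / rlKernel α t * rlKernel α s := by
  have ht : 0 < t := hs.trans_le hst
  have hαm : 0 < α + m := by positivity
  rw [abs_mul, abs_mul, abs_of_pos (rlKernel_pos hαm hs), abs_of_pos (rlKernel_pos hαm ht),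
    mul_div_assoc, mul_assoc]
  gcongr
  exact (div_le_iff₀ (rlKernel_pos hα hs)).1
    (monotoneOn_rlKernel_add_div_rlKernel hα m.cast_nonneg hs ht hst)

theorem hasSum_lconv_rlSeries (hα : 0 < α) (hβ : 0 < β) (ht : 0 < t)
    (hc : Summable fun m : ℕ => c m * rlKernel (α + m) t)
    (hd : Summable fun m : ℕ => d m * rlKernel (β + m) t) :
    HasSum (fun N : ℕ => (∑ p ∈ Finset.HasAntidiagonal.antidiagonal N, c p.1 * d p.2) *
        rlKernel (α + β + N) t)
      (lconv (rlSeries α c) (rlSeries β d) t) := by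
  have double_sum := hasSum_lconv_of_dominated ht.le
    (fun m : ℕ => (measurable_rlKernel (α + m)).const_mul (c m))
    (fun n : ℕ => (measurable_rlKernel (β + n)).const_mul (d n))
    (fun m s hs => abs_mul_rlKernel_le hα hs.1 hs.2.le c m)
    (fun n s hs => abs_mul_rlKernel_le hβ hs.1 hs.2.le d n)
    (hc.abs.div_const _) (hd.abs.div_const _)
    (intervalIntegrable_rlKernel_sub_mul_rlKernel hα hβ ht)
  refine (hasSum_sum_antidiagonal double_sum).congr_fun fun N => ?_
  rw [Finset.sum_mul]
  refine Finset.sum_congr rfl fun p hp => ?_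
  rw [lconv_const_mul, lconv_rlKernel (by positivity) (by positivity) ht, add_add_add_comm,
    ← Nat.cast_add, Finset.HasAntidiagonal.mem_antidiagonal.1 hp]

theorem lconv_rlSeries_eq_one (hα : 0 < α) (hβ : 0 < β) (hαβ : α + β = 1) (ht : 0 < t)
    (hc : Summable fun m : ℕ => c m * rlKernel (α + m) t)
    (hd : Summable fun m : ℕ => d m * rlKernel (β + m) t) (hcd0 : c 0 * d 0 = 1)
    (hcd : ∀ N ≠ 0, ∑ p ∈ Finset.HasAntidiagonal.antidiagonal N, c p.1 * d p.2 = 0) :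
    lconv (rlSeries α c) (rlSeries β d) t = 1 := by
  rw [← (hasSum_lconv_rlSeries hα hβ ht hc hd).tsum_eq,
    tsum_eq_single 0 fun N hN => by rw [hcd N hN, zero_mul]]
  simp [hcd0, hαβ, rlKernel_one]

end RlSeries

theorem sum_antidiagonal_gamma_ratio (α : ℝ) (a b : ℕ → ℝ) (N : ℕ) :
    ∑ p ∈ Finset.HasAntidiagonal.antidiagonal N, a p.1 * (Gamma (α + p.1) / Gamma α) *
        (b p.2 * (Gamma (1 - α + p.2) / Gamma (1 - α))) =
      (Gamma α * Gamma (1 - α))⁻¹ * ∑ m ∈ Finset.range (N + 1),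
        Gamma ((m : ℝ) + 1 - α) * Gamma (α + (N : ℝ) - (m : ℝ)) * a (N - m) * b m := by
  rw [← Finset.Nat.sum_antidiagonal_swap, Finset.Nat.sum_antidiagonal_eq_sum_range_succ_mk,
    Finset.mul_sum]
  refine Finset.sum_congr rfl fun m hm => ?_
  rw [Prod.swap, Nat.cast_sub (Finset.mem_range_succ_iff.1 hm), sub_add_eq_add_sub 1 α,
    add_comm 1 (m : ℝ), ← add_sub_assoc α]
  field_simp

theorem statement1_general {α t : ℝ} (hα0 : 0 < α) (hα1 : α < 1) (ht : 0 < t) {a b : ℕ → ℝ}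
    (ha : Summable fun m : ℕ => a m * t ^ m) (hb : Summable fun m : ℕ => b m * t ^ m)
    (hab0 : a 0 * b 0 = 1)
    (hab : ∀ N : ℕ, 1 ≤ N →
      ∑ m ∈ Finset.range (N + 1),
        Gamma ((m : ℝ) + 1 - α) * Gamma (α + (N : ℝ) - (m : ℝ)) * a (N - m) * b m = 0)
    {κ k : ℝ → ℝ}
    (hκ : ∀ s ∈ Ioo 0 t, κ s = rlKernel α s * ∑' m : ℕ, a m * s ^ m)
    (hk : ∀ s ∈ Ioo 0 t, k s = rlKernel (1 - α) s * ∑' m : ℕ, b m * s ^ m) :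
    lconv κ k t = 1 := by
  have hβ : 0 < 1 - α := sub_pos.2 hα1
  have hΓα : Gamma α ≠ 0 := (Gamma_pos_of_pos hα0).ne'
  have hΓβ : Gamma (1 - α) ≠ 0 := (Gamma_pos_of_pos hβ).ne'
  rw [lconv_congr ht.le (fun s hs => (hκ s hs).trans (rlKernel_mul_tsum_pow hα0 hs.1 a))
    (fun s hs => (hk s hs).trans (rlKernel_mul_tsum_pow hβ hs.1 b))]
  refine lconv_rlSeries_eq_one hα0 hβ (add_sub_cancel α 1) ht ?_ ?_ ?_ fun N hN => by
    rw [sum_antidiagonal_gamma_ratio, hab N (Nat.one_le_iff_ne_zero.2 hN), mul_zero]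
  · simpa only [rlKernel_mul_mul_pow hα0 ht a] using ha.mul_left (rlKernel α t)
  · simpa only [rlKernel_mul_mul_pow hβ ht b] using hb.mul_left (rlKernel (1 - α) t)
  · simpa [hΓα, hΓβ] using hab0

/-- Sonine's class of kernels. If `κ(t) = h_α(t) ∑ aₘ tᵐ` and
`k(t) = h_{1-α}(t) ∑ bₘ tᵐ` with everywhere-convergent power series whose coefficients
satisfy `a₀b₀ = 1` and `∑_{m=0}^{N} Γ(m+1-α) Γ(α+N-m) a_{N-m} b_m = 0` for `N ≥ 1`,
then `(κ * k)(t) = 1` for all `t > 0`. -/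
theorem statement1 (α : ℝ) (hα0 : 0 < α) (hα1 : α < 1) (a b : ℕ → ℝ)
    (ha_conv : ∀ t : ℝ, Summable fun m : ℕ => a m * t ^ m)
    (hb_conv : ∀ t : ℝ, Summable fun m : ℕ => b m * t ^ m)
    (ha0 : a 0 ≠ 0) (hab0 : a 0 * b 0 = 1)
    (hab : ∀ N : ℕ, 1 ≤ N →
      ∑ m ∈ Finset.range (N + 1),
        Real.Gamma ((m : ℝ) + 1 - α) * Real.Gamma (α + (N : ℝ) - (m : ℝ)) *
          a (N - m) * b m = 0)
    (κ k : ℝ → ℝ)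
    (hκ : ∀ t : ℝ, 0 < t →
      κ t = t ^ (α - 1) / Real.Gamma α * ∑' m : ℕ, a m * t ^ m)
    (hk : ∀ t : ℝ, 0 < t →
      k t = t ^ ((1 - α) - 1) / Real.Gamma (1 - α) * ∑' m : ℕ, b m * t ^ m) :
    ∀ t : ℝ, 0 < t → lconv κ k t = 1 :=
  fun t ht => statement1_general hα0 hα1 ht (ha_conv t) (hb_conv t) hab0 hab
    (fun s hs => hκ s hs.1) (fun s hs => hk s hs.1)
end

section
/- If κ ∈ C_{−1}(0,∞) and f ∈ C_{−1}(0,∞), then the Laplace convolution κ * f, i.e. t ↦ ∫₀ᵗ κ(t−τ) f(τ) dτ, also belongs to C_{−1}(0,∞). -/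
open Real MeasureTheory Set Filter Topology

/-!
Substituting `τ = ts` turns the convolution of `t^p k(t)` and `t^q g(t)` into `t^(p+q+1)` times
`∫₀¹ (1-s)^p s^q k(t(1-s)) g(ts) ds`. The singularities now sit in the Beta weight `(1-s)^p s^q`,
which is integrable and does not depend on `t`, so this integral is continuous in `t ≥ 0`.
-/

theorem intervalIntegrable_one_sub_rpow_mul_rpow {p q : ℝ} (hp : -1 < p) (hq : -1 < q) :
    IntervalIntegrable (fun s : ℝ ↦ (1 - s) ^ p * s ^ q) volume 0 1 := by
  have hbeta := Complex.betaIntegral_convergent (u := (q + 1 : ℝ)) (v := (p + 1 : ℝ))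
    (by rw [Complex.ofReal_re]; linarith) (by rw [Complex.ofReal_re]; linarith)
  refine hbeta.norm.congr_uIoo fun s hs ↦ ?_
  rw [uIoo_of_le zero_le_one] at hs
  have norm_left : ‖(s : ℂ) ^ (((q + 1 : ℝ) : ℂ) - 1)‖ = s ^ q := by
    simp [Complex.norm_cpow_eq_rpow_re_of_pos hs.1]
  have norm_right : ‖(1 - (s : ℂ)) ^ (((p + 1 : ℝ) : ℂ) - 1)‖ = (1 - s) ^ p := by
    rw [← Complex.ofReal_one, ← Complex.ofReal_sub,
      Complex.norm_cpow_eq_rpow_re_of_pos (sub_pos.2 hs.2)]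
    simp
  simp only [norm_mul, norm_left, norm_right, mul_comm]

theorem continuousOn_setIntegral_smul {X Y 𝕜 E : Type*} [TopologicalSpace X]
    [TopologicalSpace Y] [MeasurableSpace Y] [OpensMeasurableSpace Y] [NontriviallyNormedField 𝕜]
    [NormedAddCommGroup E] [NormedSpace ℝ E] [NormedSpace 𝕜 E]
    {μ : Measure Y} {w : Y → 𝕜} {F : X → Y → E} {A : Set X} {K : Set Y}
    (hK : IsCompact K) (hK_meas : MeasurableSet K)
    (hw : IntegrableOn w K μ) (hF : ContinuousOn F.uncurry (A ×ˢ K)) :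
    ContinuousOn (fun x ↦ ∫ y in K, w y • F x y ∂μ) A := by
  -- `F` is controlled only on `A ×ˢ K`, so integrate over the subtype `K` instead of over `Y`.
  have : CompactSpace K := isCompact_iff_compactSpace.1 hK
  simp_rw [← integral_subtype_comap hK_meas]
  refine continuousOn_integral_bilinear_of_locally_integrable_of_compact_support
    (ContinuousLinearMap.lsmul 𝕜 𝕜) (f := fun x (y : K) ↦ F x y) (g := fun y : K ↦ w y)
    isCompact_univ ?_ (fun _ y _ hy ↦ absurd (mem_univ y) hy) ?_
  · exact hF.comp (f := fun z : X × K ↦ (z.1, (z.2 : Y))) (by fun_prop)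
      fun z hz ↦ ⟨hz.1, z.2.2⟩
  · exact ((integrableOn_iff_comap_subtypeVal hK_meas).1 hw).integrableOn

theorem lconv_eq_mul_integral (f g : ℝ → ℝ) (t : ℝ) :
    lconv f g t = t * ∫ s in (0 : ℝ)..1, f (t * (1 - s)) * g (t * s) := by
  have h := intervalIntegral.mul_integral_comp_mul_left (a := 0) (b := 1)
    (f := fun τ ↦ f (t - τ) * g τ) t
  simpa only [lconv, mul_zero, mul_one, mul_sub] using h.symm

/-- The factor that remains of the convolution of `t ↦ t ^ p * k t` and `t ↦ t ^ q * g t` after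
`t ^ (p + q + 1)` is divided out. Unlike the quotient, the integral over the fixed interval `[0, 1]`
also makes sense at `t = 0`. -/
noncomputable def lconvFactor (p q : ℝ) (k g : ℝ → ℝ) : ℝ → ℝ :=
  fun t ↦ ∫ s in (0 : ℝ)..1, ((1 - s) ^ p * s ^ q) * (k (t * (1 - s)) * g (t * s))

theorem continuousOn_lconvFactor {p q : ℝ} {k g : ℝ → ℝ} (hp : -1 < p) (hq : -1 < q)
    (hk : ContinuousOn k (Ici 0)) (hg : ContinuousOn g (Ici 0)) :
    ContinuousOn (lconvFactor p q k g) (Ici 0) := by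
  have weight_integrable :=
    (intervalIntegrable_iff_integrableOn_Icc_of_le zero_le_one).1
      (intervalIntegrable_one_sub_rpow_mul_rpow hp hq)
  have integrand_continuous :
      ContinuousOn (fun z : ℝ × ℝ ↦ k (z.1 * (1 - z.2)) * g (z.1 * z.2)) (Ici 0 ×ˢ Icc 0 1) :=
    (hk.comp (by fun_prop) fun _ hz ↦ mul_nonneg hz.1 (sub_nonneg.2 hz.2.2)).mul
      (hg.comp (by fun_prop) fun _ hz ↦ mul_nonneg hz.1 hz.2.1)
  have h := continuousOn_setIntegral_smul isCompact_Icc measurableSet_Icc weight_integrable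
    (F := fun t s ↦ k (t * (1 - s)) * g (t * s)) integrand_continuous
  unfold lconvFactor
  simpa only [intervalIntegral.integral_of_le zero_le_one, integral_Icc_eq_integral_Ioc,
    smul_eq_mul] using h

theorem lconv_eq_rpow_mul_lconvFactor {p q t : ℝ} {f₁ f₂ k g : ℝ → ℝ} (ht : 0 < t)
    (hf₁ : EqOn f₁ (fun x ↦ x ^ p * k x) (Ioo 0 t))
    (hf₂ : EqOn f₂ (fun x ↦ x ^ q * g x) (Ioo 0 t)) :
    lconv f₁ f₂ t = t ^ (p + q + 1) * lconvFactor p q k g t := by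
  have integrand_eq : EqOn (fun s ↦ f₁ (t * (1 - s)) * f₂ (t * s))
      (fun s ↦ t ^ (p + q) * (((1 - s) ^ p * s ^ q) * (k (t * (1 - s)) * g (t * s))))
      (Ioo 0 1) := by
    intro s ⟨hs0, hs1⟩
    have left_mem : t * (1 - s) ∈ Ioo 0 t := by constructor <;> nlinarith
    have right_mem : t * s ∈ Ioo 0 t := by constructor <;> nlinarith
    simp only [hf₁ left_mem, hf₂ right_mem, mul_rpow ht.le hs0.le,
      mul_rpow ht.le (sub_pos.2 hs1).le, rpow_add ht]
    ring
  calc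
    lconv f₁ f₂ t = t * ∫ s in (0 : ℝ)..1, f₁ (t * (1 - s)) * f₂ (t * s) :=
      lconv_eq_mul_integral f₁ f₂ t
    _ = t * (t ^ (p + q) * lconvFactor p q k g t) := by
      rw [intervalIntegral.integral_congr_Ioo_of_le zero_le_one integrand_eq,
        intervalIntegral.integral_const_mul, lconvFactor]
    _ = t ^ (p + q + 1) * lconvFactor p q k g t := by
      rw [rpow_add_one ht.ne']
      ring

/-- The Laplace convolution maps `C_{-1}(0,∞) × C_{-1}(0,∞)` into
`C_{-1}(0,∞)`. -/
theorem statement2 (κ f : ℝ → ℝ) (hκ : Cm1 κ) (hf : Cm1 f) : Cm1 (lconv κ f) := by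
  obtain ⟨p, hp, k, hk, hκ_eq⟩ := hκ
  obtain ⟨q, hq, g, hg, hf_eq⟩ := hf
  exact ⟨p + q + 1, by linarith, lconvFactor p q k g, continuousOn_lconvFactor hp hq hk hg,
    fun t ht ↦ lconv_eq_rpow_mul_lconvFactor ht (fun x hx ↦ hκ_eq x hx.1)
      fun x hx ↦ hf_eq x hx.1⟩
end

section
/- Second Fundamental Theorem for the GFD (Caputo case): Let (κ, k) be a pair of Sonine kernels from S_{−1}. Then for every f ∈ C¹_{−1}(0,∞) and every t > 0, (I_{(κ)} ∗D_{(k)} f)(t) = f(t) − f(0), where f(0) denotes the limit of f(t) as t → 0+. -/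
open Real MeasureTheory Set Filter Topology

/-!
Everything takes place among the functions that are integrable near `0` and bounded on compact
subsets of `(0,∞)`. They are closed under the Laplace convolution, since in `f (t - τ) * g τ` the
factor `f` is bounded for `τ ≤ t / 2` and the factor `g` is bounded for `t / 2 ≤ τ`, and Fubini
makes the convolution associative at *every* point. If `f = f(0) + 1 * f'`, then
`k * f = 1 * (f(0) k + k * f')`, so Lebesgue differentiation identifies the Caputo derivative with
`k * f'` almost everywhere, and `κ * (k * f') = (κ * k) * f' = 1 * f' = f - f(0)`.
-/

open scoped Convolution

section LaplaceConvolution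

theorem lconv_congr_ae {a a' b b' : ℝ → ℝ} {s : ℝ} (hs : 0 ≤ s)
    (ha : ∀ᵐ x, x ∈ Ioo 0 s → a x = a' x) (hb : ∀ᵐ x, x ∈ Ioo 0 s → b x = b' x) :
    lconv a b s = lconv a' b' s := by
  have ha_refl : ∀ᵐ x, s - x ∈ Ioo 0 s → a (s - x) = a' (s - x) :=
    (quasiMeasurePreserving_sub_left_of_right_invariant volume s).ae ha
  simp only [lconv, intervalIntegral.integral_of_le hs, integral_Ioc_eq_integral_Ioo]
  refine setIntegral_congr_ae measurableSet_Ioo ?_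
  filter_upwards [ha_refl, hb] with x hax hbx hx
  rw [hax ⟨sub_pos.2 hx.2, sub_lt_self s hx.1⟩, hbx hx]

theorem lconv_congr_s7 {a a' b b' : ℝ → ℝ} {s : ℝ} (hs : 0 ≤ s)
    (ha : EqOn a a' (Ioo 0 s)) (hb : EqOn b b' (Ioo 0 s)) : lconv a b s = lconv a' b' s :=
  lconv_congr_ae hs (.of_forall ha) (.of_forall hb)

theorem lconv_one_left (g : ℝ → ℝ) (t : ℝ) : lconv 1 g t = ∫ x in (0 : ℝ)..t, g x := by
  simp [lconv]

theorem lconv_one_right (g : ℝ → ℝ) (t : ℝ) : lconv g 1 t = ∫ x in (0 : ℝ)..t, g x := by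
  simp [lconv, intervalIntegral.integral_comp_sub_left]

theorem support_mul_comp_sub_left_subset_Ioo {A B : ℝ → ℝ} (hA : Function.support A ⊆ Ioi 0)
    (hB : Function.support B ⊆ Ioi 0) (s : ℝ) :
    (Function.support fun τ => B τ * A (s - τ)) ⊆ Ioo 0 s := fun _ hτ =>
  ⟨hB (left_ne_zero_of_mul hτ), sub_pos.1 (hA (right_ne_zero_of_mul hτ))⟩

theorem support_lconv_subset_Ioi (A : ℝ → ℝ) {B : ℝ → ℝ} (hB : Function.support B ⊆ Ioi 0) :
    Function.support (lconv A B) ⊆ Ioi 0 := by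
  intro s hs
  by_contra hs0
  refine hs (intervalIntegral.integral_zero_ae (.of_forall fun τ hτ => ?_))
  rw [uIoc_of_ge (not_lt.1 hs0)] at hτ
  rw [Function.notMem_support.1 fun h => (hB h).not_ge hτ.2, mul_zero]

theorem convolution_eq_lconv {A B : ℝ → ℝ} (hA : Function.support A ⊆ Ioi 0)
    (hB : Function.support B ⊆ Ioi 0) :
    B ⋆[ContinuousLinearMap.mul ℝ ℝ, volume] A = lconv A B := by
  ext s
  simp only [convolution_def, ContinuousLinearMap.mul_apply', lconv, mul_comm (A _)]
  exact (intervalIntegral.integral_eq_integral_of_support_subset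
    ((support_mul_comp_sub_left_subset_Ioo hA hB s).trans Ioo_subset_Ioc_self)).symm

theorem support_indicator_Ioc_subset_Ioi (T : ℝ) (g : ℝ → ℝ) :
    Function.support ((Ioc 0 T).indicator g) ⊆ Ioi 0 :=
  support_indicator_subset.trans Ioc_subset_Ioi_self

theorem eqOn_indicator_Ioc {s T : ℝ} (hs : s ≤ T) (g : ℝ → ℝ) :
    EqOn g ((Ioc 0 T).indicator g) (Ioo 0 s) := fun _ hx =>
  (indicator_of_mem (s := Ioc 0 T) ⟨hx.1, hx.2.le.trans hs⟩ g).symm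

end LaplaceConvolution

/-- A convolution kernel on `(0,∞)`: a function that is integrable near `0` and bounded on compact
subsets of `(0,∞)`. This class contains `C_{-1}(0,∞)`, it is closed under the Laplace convolution,
and the Laplace convolution of two of its members exists at every point. -/
structure IsConvKernel (g : ℝ → ℝ) : Prop where
  integrableOn : ∀ T, IntegrableOn g (Ioc 0 T)
  exists_bound : ∀ ε > 0, ∀ T, ∃ C, ∀ x ∈ Icc ε T, |g x| ≤ C

namespace IsConvKernel

variable {a b c : ℝ → ℝ} {s t T : ℝ}

theorem one : IsConvKernel 1 where
  integrableOn T := integrableOn_const measure_Ioc_lt_top.ne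
  exists_bound _ _ _ := ⟨1, by simp⟩

protected theorem norm (ha : IsConvKernel a) : IsConvKernel fun x => ‖a x‖ where
  integrableOn T := (ha.integrableOn T).norm
  exists_bound := by simpa using ha.exists_bound

theorem indicator_Ioc (ha : IsConvKernel a) (T : ℝ) : IsConvKernel ((Ioc 0 T).indicator a) where
  integrableOn S := (ha.integrableOn S).indicator measurableSet_Ioc
  exists_bound ε hε S := by
    obtain ⟨C, hC⟩ := ha.exists_bound ε hε S
    exact ⟨C, fun x hx => (norm_indicator_le_norm_self a x).trans (hC x hx)⟩

theorem integrable_indicator_Ioc (ha : IsConvKernel a) (T : ℝ) :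
    Integrable ((Ioc 0 T).indicator a) :=
  (ha.integrableOn T).integrable_indicator measurableSet_Ioc

theorem intervalIntegrable (ha : IsConvKernel a) (hs : 0 ≤ s) (ht : 0 ≤ t) :
    IntervalIntegrable a volume s t :=
  intervalIntegrable_iff.2 ((ha.integrableOn (max s t)).mono_set
    (Ioc_subset_Ioc_left (le_min hs ht)))

theorem intervalIntegrable_lconv_integrand_left_half (ha : IsConvKernel a) (hb : IsConvKernel b)
    (hs : 0 < s) : IntervalIntegrable (fun τ => a (s - τ) * b τ) volume 0 (s / 2) := by
  obtain ⟨C, hC⟩ := ha.exists_bound (s / 2) (half_pos hs) s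
  have ha_refl : IntervalIntegrable (fun τ => a (s - τ)) volume 0 (s / 2) := by
    simpa [sub_half] using (ha.intervalIntegrable hs.le (half_pos hs).le).comp_sub_left s
  rw [intervalIntegrable_iff_integrableOn_Ioc_of_le (half_pos hs).le] at ha_refl ⊢
  refine (hb.integrableOn (s / 2)).bdd_mul (c := C) ha_refl.aestronglyMeasurable ?_
  filter_upwards [ae_restrict_mem measurableSet_Ioc] with τ hτ
  exact hC _ ⟨by linarith [hτ.2], by linarith [hτ.1]⟩

theorem intervalIntegrable_lconv_integrand_right_half (ha : IsConvKernel a) (hb : IsConvKernel b)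
    (hs : 0 < s) : IntervalIntegrable (fun τ => a (s - τ) * b τ) volume (s / 2) s := by
  simpa [mul_comm, sub_half] using
    ((hb.intervalIntegrable_lconv_integrand_left_half ha hs).comp_sub_left s).symm

theorem intervalIntegrable_lconv_integrand (ha : IsConvKernel a) (hb : IsConvKernel b)
    (hs : 0 < s) : IntervalIntegrable (fun τ => a (s - τ) * b τ) volume 0 s :=
  (ha.intervalIntegrable_lconv_integrand_left_half hb hs).trans
    (ha.intervalIntegrable_lconv_integrand_right_half hb hs)

theorem lconv_eq_add_integral_half (ha : IsConvKernel a) (hb : IsConvKernel b) (hs : 0 < s) :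
    lconv a b s =
      (∫ τ in (0 : ℝ)..s / 2, a (s - τ) * b τ) + ∫ τ in (0 : ℝ)..s / 2, b (s - τ) * a τ := by
  have h_refl := intervalIntegral.integral_comp_sub_left (a := 0) (b := s / 2)
    (fun τ => a (s - τ) * b τ) s
  simp only [sub_sub_cancel, sub_zero, sub_half, mul_comm (a _)] at h_refl
  rw [h_refl, lconv, ← intervalIntegral.integral_add_adjacent_intervals
    (ha.intervalIntegrable_lconv_integrand_left_half hb hs)
    (ha.intervalIntegrable_lconv_integrand_right_half hb hs)]
  simp only [mul_comm (b _)]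

theorem abs_integral_lconv_integrand_le (hb : IsConvKernel b) {C : ℝ} (hs : 0 ≤ s) (hsT : s ≤ T)
    (hC : ∀ x ∈ Icc (s / 2) s, |a x| ≤ C) :
    |∫ τ in (0 : ℝ)..s / 2, a (s - τ) * b τ| ≤ C * ∫ τ in (0 : ℝ)..T, |b τ| := by
  have hC0 : 0 ≤ C := (abs_nonneg _).trans (hC s ⟨by linarith, le_rfl⟩)
  have hb_abs (u : ℝ) (hu : 0 ≤ u) : IntervalIntegrable (fun τ => |b τ|) volume 0 u :=
    (hb.intervalIntegrable le_rfl hu).abs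
  calc |∫ τ in (0 : ℝ)..s / 2, a (s - τ) * b τ| ≤ ∫ τ in (0 : ℝ)..s / 2, C * |b τ| := by
        rw [← Real.norm_eq_abs]
        refine intervalIntegral.norm_integral_le_of_norm_le (by linarith)
          (.of_forall fun τ hτ => ?_) ((hb_abs _ (by linarith)).const_mul C)
        rw [norm_mul]
        exact mul_le_mul_of_nonneg_right (hC _ ⟨by linarith [hτ.2], by linarith [hτ.1]⟩)
          (norm_nonneg _)
    _ = C * ∫ τ in (0 : ℝ)..s / 2, |b τ| := intervalIntegral.integral_const_mul _ _
    _ ≤ C * ∫ τ in (0 : ℝ)..T, |b τ| :=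
        mul_le_mul_of_nonneg_left (intervalIntegral.integral_mono_interval le_rfl (by linarith)
          (by linarith) (.of_forall fun _ => abs_nonneg _) (hb_abs _ (by linarith))) hC0

protected theorem lconv (ha : IsConvKernel a) (hb : IsConvKernel b) :
    IsConvKernel (lconv a b) where
  integrableOn T := by
    have h_conv := (hb.integrable_indicator_Ioc T).integrable_convolution
      (ContinuousLinearMap.mul ℝ ℝ) (ha.integrable_indicator_Ioc T)
    rw [convolution_eq_lconv (support_indicator_Ioc_subset_Ioi T a)
      (support_indicator_Ioc_subset_Ioi T b)] at h_conv
    exact h_conv.integrableOn.congr_fun (fun s hs => (lconv_congr_s7 hs.1.le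
      (eqOn_indicator_Ioc hs.2 a) (eqOn_indicator_Ioc hs.2 b)).symm) measurableSet_Ioc
  exists_bound ε hε T := by
    obtain ⟨Ca, hCa⟩ := ha.exists_bound (ε / 2) (half_pos hε) T
    obtain ⟨Cb, hCb⟩ := hb.exists_bound (ε / 2) (half_pos hε) T
    refine ⟨Ca * (∫ τ in (0 : ℝ)..T, |b τ|) + Cb * ∫ τ in (0 : ℝ)..T, |a τ|, fun s hs => ?_⟩
    have hs0 : 0 < s := hε.trans_le hs.1
    have h_mem : Icc (s / 2) s ⊆ Icc (ε / 2) T := Icc_subset_Icc (by linarith [hs.1]) hs.2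
    rw [ha.lconv_eq_add_integral_half hb hs0]
    exact (abs_add_le _ _).trans (add_le_add
      (hb.abs_integral_lconv_integrand_le hs0.le hs.2 fun x hx => hCa x (h_mem hx))
      (ha.abs_integral_lconv_integrand_le hs0.le hs.2 fun x hx => hCb x (h_mem hx)))

theorem lconv_assoc_of_support_subset (ha : IsConvKernel a) (hb : IsConvKernel b)
    (hc : IsConvKernel c) (ha_int : Integrable a) (hb_int : Integrable b) (hc_int : Integrable c)
    (ha_supp : Function.support a ⊆ Ioi 0) (hb_supp : Function.support b ⊆ Ioi 0)
    (hc_supp : Function.support c ⊆ Ioi 0) (hT : 0 < T) :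
    lconv (lconv a b) c T = lconv a (lconv b c) T := by
  have norm_supp {g : ℝ → ℝ} (hg : Function.support g ⊆ Ioi 0) :
      (Function.support fun x => ‖g x‖) ⊆ Ioi 0 := fun x hx => hg (norm_ne_zero_iff.1 hx)
  have triple_exists : ConvolutionExistsAt (fun x => ‖c x‖)
      ((fun x => ‖b x‖) ⋆[ContinuousLinearMap.mul ℝ ℝ, volume] fun x => ‖a x‖) T
      (ContinuousLinearMap.mul ℝ ℝ) volume := by
    rw [convolution_eq_lconv (norm_supp ha_supp) (norm_supp hb_supp), ConvolutionExistsAt]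
    simp only [ContinuousLinearMap.mul_apply']
    rw [← integrableOn_iff_integrable_of_support_subset
        ((support_mul_comp_sub_left_subset_Ioo
          (support_lconv_subset_Ioi (fun x => ‖a x‖) (norm_supp hb_supp))
          (norm_supp hc_supp) T).trans Ioo_subset_Ioc_self),
      ← intervalIntegrable_iff_integrableOn_Ioc_of_le hT.le]
    simpa only [mul_comm] using
      (ha.norm.lconv hb.norm).intervalIntegrable_lconv_integrand hc.norm hT
  have h_assoc := convolution_assoc (ContinuousLinearMap.mul ℝ ℝ) (ContinuousLinearMap.mul ℝ ℝ)
    (ContinuousLinearMap.mul ℝ ℝ) (ContinuousLinearMap.mul ℝ ℝ) mul_assoc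
    hc_int.aestronglyMeasurable hb_int.aestronglyMeasurable ha_int.aestronglyMeasurable
    (hc_int.ae_convolution_exists _ hb_int) (hb_int.norm.ae_convolution_exists _ ha_int.norm)
    triple_exists
  rw [convolution_eq_lconv hb_supp hc_supp, convolution_eq_lconv ha_supp hb_supp,
    convolution_eq_lconv ha_supp (support_lconv_subset_Ioi b hc_supp),
    convolution_eq_lconv (support_lconv_subset_Ioi a hb_supp) hc_supp] at h_assoc
  exact h_assoc.symm

theorem lconv_assoc (ha : IsConvKernel a) (hb : IsConvKernel b) (hc : IsConvKernel c)
    (hT : 0 < T) : lconv (lconv a b) c T = lconv a (lconv b c) T := by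
  have trunc_lconv (f g : ℝ → ℝ) :
      EqOn (lconv f g) (lconv ((Ioc 0 T).indicator f) ((Ioc 0 T).indicator g)) (Ioo 0 T) :=
    fun s hs => lconv_congr_s7 hs.1.le (eqOn_indicator_Ioc hs.2.le f) (eqOn_indicator_Ioc hs.2.le g)
  rw [lconv_congr_s7 hT.le (trunc_lconv a b) (eqOn_indicator_Ioc le_rfl c),
    lconv_congr_s7 hT.le (eqOn_indicator_Ioc le_rfl a) (trunc_lconv b c)]
  exact lconv_assoc_of_support_subset (ha.indicator_Ioc T) (hb.indicator_Ioc T)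
    (hc.indicator_Ioc T) (ha.integrable_indicator_Ioc T) (hb.integrable_indicator_Ioc T)
    (hc.integrable_indicator_Ioc T) (support_indicator_Ioc_subset_Ioi T a)
    (support_indicator_Ioc_subset_Ioi T b) (support_indicator_Ioc_subset_Ioi T c) hT

end IsConvKernel

theorem Cm10.cm1 {g : ℝ → ℝ} (hg : Cm10 g) : Cm1 g :=
  let ⟨p, hp, _, h⟩ := hg
  ⟨p, hp, h⟩

theorem Cm1.isConvKernel {g : ℝ → ℝ} (hg : Cm1 g) : IsConvKernel g := by
  obtain ⟨p, hp, g₁, hg₁, hg_eq⟩ := hg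
  constructor
  · intro T
    rcases le_total T 0 with hT | hT
    · simp [Ioc_eq_empty hT.not_gt]
    have h_int : IntervalIntegrable (fun x => x ^ p * g₁ x) volume 0 T :=
      (intervalIntegral.intervalIntegrable_rpow' hp).mul_continuousOn
        (hg₁.mono (uIcc_of_le hT ▸ Icc_subset_Ici_self))
    exact ((intervalIntegrable_iff_integrableOn_Ioc_of_le hT).1 h_int).congr_fun
      (fun x hx => (hg_eq x hx.1).symm) measurableSet_Ioc
  · intro ε hε T
    have hpos {x : ℝ} (hx : x ∈ Icc ε T) : 0 < x := hε.trans_le hx.1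
    have h_cont : ContinuousOn (fun x => x ^ p * g₁ x) (Icc ε T) :=
      (continuousOn_id.rpow_const fun x hx => .inl (hpos hx).ne').mul
        (hg₁.mono fun x hx => (hpos hx).le)
    exact isCompact_Icc.exists_bound_of_continuousOn
      (h_cont.congr fun x hx => hg_eq x (hpos hx))

section CaputoDerivative

variable {κ k f g : ℝ → ℝ} {f0 t : ℝ}

theorem eq_add_integral_deriv_of_tendsto (hf_diff : ∀ x, 0 < x → DifferentiableAt ℝ f x)
    (hf0 : Tendsto f (𝓝[>] 0) (𝓝 f0)) (ht : 0 < t)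
    (hf' : IntervalIntegrable (deriv f) volume 0 t) :
    f t = f0 + ∫ x in (0 : ℝ)..t, deriv f x := by
  rw [intervalIntegral.integral_eq_sub_of_hasDerivAt_of_tendsto ht
    (fun x hx => (hf_diff x hx.1).hasDerivAt) hf' hf0
    ((hf_diff t ht).continuousAt.tendsto.mono_left nhdsWithin_le_nhds), add_sub_cancel]

theorem lconv_eq_integral_of_eq_add_integral (hk : IsConvKernel k) (hg : IsConvKernel g)
    (hf : ∀ x, 0 < x → f x = f0 + ∫ y in (0 : ℝ)..x, g y) (ht : 0 < t) :
    lconv k f t = ∫ x in (0 : ℝ)..t, (f0 * k x + lconv k g x) := by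
  have hf_lconv : EqOn f (fun x => f0 * 1 + lconv g 1 x) (Ioo 0 t) := fun x hx => by
    simp only [lconv_one_right, mul_one, hf x hx.1]
  calc lconv k f t = lconv k (fun x => f0 * 1 + lconv g 1 x) t :=
        lconv_congr_s7 ht.le (eqOn_refl _ _) hf_lconv
    _ = f0 * lconv k 1 t + lconv k (lconv g 1) t := by
        simp only [lconv, mul_add, mul_left_comm _ f0]
        rw [← intervalIntegral.integral_const_mul]
        exact intervalIntegral.integral_add
          ((hk.intervalIntegrable_lconv_integrand .one ht).const_mul f0)
          (hk.intervalIntegrable_lconv_integrand (hg.lconv .one) ht)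
    _ = f0 * lconv k 1 t + lconv (lconv k g) 1 t := by rw [hk.lconv_assoc hg .one ht]
    _ = ∫ x in (0 : ℝ)..t, (f0 * k x + lconv k g x) := by
        rw [lconv_one_right, lconv_one_right, ← intervalIntegral.integral_const_mul,
          ← intervalIntegral.integral_add ((hk.intervalIntegrable le_rfl ht.le).const_mul f0)
            ((hk.lconv hg).intervalIntegrable le_rfl ht.le)]

theorem ae_hasDerivAt_lconv (hk : IsConvKernel k) (hg : IsConvKernel g)
    (hf : ∀ x, 0 < x → f x = f0 + ∫ y in (0 : ℝ)..x, g y) (t : ℝ) :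
    ∀ᵐ s, s ∈ Ioo 0 t → HasDerivAt (lconv k f) (f0 * k s + lconv k g s) s := by
  rcases le_or_gt t 0 with ht | ht
  · simp [Ioo_eq_empty ht.not_gt]
  have h_int : IntervalIntegrable (fun x => f0 * k x + lconv k g x) volume 0 t :=
    ((hk.intervalIntegrable le_rfl ht.le).const_mul f0).add
      ((hk.lconv hg).intervalIntegrable le_rfl ht.le)
  filter_upwards [h_int.ae_hasDerivAt_integral] with s hs hst
  rw [uIcc_of_le ht.le] at hs
  refine (hs (Ioo_subset_Icc_self hst) 0 ⟨le_rfl, ht.le⟩).congr_of_eventuallyEq ?_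
  filter_upwards [Ioi_mem_nhds hst.1] with x hx
  exact lconv_eq_integral_of_eq_add_integral hk hg hf hx

theorem statement7_general (hκ : IsConvKernel κ) (hk : IsConvKernel k) (hg : IsConvKernel g)
    (hSonine : ∀ t, 0 < t → lconv κ k t = 1)
    (hf : ∀ t, 0 < t → f t = f0 + ∫ x in (0 : ℝ)..t, g x) (ht : 0 < t) :
    lconv κ (fun s => deriv (lconv k f) s - f0 * k s) t = f t - f0 := by
  have caputo_eq : ∀ᵐ s, s ∈ Ioo 0 t → deriv (lconv k f) s - f0 * k s = lconv k g s := by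
    filter_upwards [ae_hasDerivAt_lconv hk hg hf t] with s hs hst
    rw [(hs hst).deriv, add_sub_cancel_left]
  calc lconv κ (fun s => deriv (lconv k f) s - f0 * k s) t = lconv κ (lconv k g) t :=
        lconv_congr_ae ht.le (.of_forall fun _ _ => rfl) caputo_eq
    _ = lconv (lconv κ k) g t := (hκ.lconv_assoc hk hg ht).symm
    _ = lconv 1 g t := lconv_congr_s7 ht.le (fun s hs => hSonine s hs.1) (eqOn_refl _ _)
    _ = f t - f0 := by rw [lconv_one_left, hf t ht, add_sub_cancel_left]

end CaputoDerivative

/-- Second Fundamental Theorem for the GFD, Caputo case: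
for a Sonine pair `(κ, k)` from `S_{-1}` and `f ∈ C¹_{-1}(0,∞)`,
`(I_{(κ)} ∗D_{(k)} f)(t) = f(t) - f(0)` for all `t > 0`, where `f(0)` is the limit of
`f` at `0+` and `(∗D_{(k)} f)(s) = d/ds (k*f)(s) - f(0) k(s)`. -/
theorem statement7 (κ k : ℝ → ℝ) (hκ : Cm10 κ) (hk : Cm10 k)
    (hSonine : ∀ t : ℝ, 0 < t → lconv κ k t = 1)
    (f : ℝ → ℝ) (f0 : ℝ)
    (hf_diff : ∀ t : ℝ, 0 < t → DifferentiableAt ℝ f t)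
    (hf' : Cm1 (deriv f))
    (hf0 : Filter.Tendsto f (nhdsWithin 0 (Set.Ioi 0)) (nhds f0)) :
    ∀ t : ℝ, 0 < t →
      lconv κ (fun s => deriv (lconv k f) s - f0 * k s) t = f t - f0 :=
  fun _ => statement7_general hκ.cm1.isConvKernel hk.cm1.isConvKernel hf'.isConvKernel hSonine
    fun _ ht => eq_add_integral_deriv_of_tendsto hf_diff hf0 ht
      (hf'.isConvKernel.intervalIntegrable le_rfl ht.le)
end
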